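/- The intersection of the subalgebras U^{≥0} and U^{<0} (as R-submodules of U) is reduced to scalars: U^{≥0} ∩ U^{<0} = R·1, the image of R under the unit map of U. -/

import Mathlib

open scoped TensorProduct

noncomputable section

/-- The base ring `R = ℂ[[ℏ]]`. -/
abbrev R : Type := PowerSeries ℂ

/-- The formal variable `ℏ ∈ ℂ[[ℏ]]`. -/
def hbar : R := PowerSeries.X

/-- The generators `e_n` of the free algebra. -/
def E (n : ℤ) : FreeAlgebra R ℤ := FreeAlgebra.ι R n

/-- The defining relations of `U_ℏ𝔫₊`:
`e_{m+1}e_n − e_n e_{m+1} − e_m e_{n+1} + e_{n+1}e_m = ℏ(e_m e_n + e_n e_m)`. -/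
inductive ERel : FreeAlgebra R ℤ → FreeAlgebra R ℤ → Prop
  | current (m n : ℤ) :
      ERel (E (m + 1) * E n - E n * E (m + 1) - E m * E (n + 1) + E (n + 1) * E m)
        (hbar • (E m * E n + E n * E m))

/-- `U = U_ℏ𝔫₊`, the quotient of the free `R`-algebra on the `e_n`, `n ∈ ℤ`,
by the two-sided ideal generated by the defining relations. -/
abbrev U : Type := RingQuot ERel

/-- The image of `e_n` in `U`. -/
def e (n : ℤ) : U := RingQuot.mkAlgHom R ERel (E n)

/-- `U^{≥0}`, the `R`-subalgebra of `U` generated by the `e_n` with `n ≥ 0`. -/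
def Uge : Subalgebra R U := Algebra.adjoin R (Set.range fun n : ℕ => e (n : ℤ))

/-- `U^{<0}`, the `R`-subalgebra of `U` generated by the `e_n` with `n < 0`. -/
def Ult : Subalgebra R U := Algebra.adjoin R {x : U | ∃ n : ℤ, n < 0 ∧ x = e n}
/-! ## Laurent polynomials -/

/-- Laurent polynomials in `k` variables. -/
abbrev Lau (S : Type) [CommRing S] (k : ℕ) : Type := AddMonoidAlgebra S (Fin k → ℤ)

/-- Permutation of exponents. -/
def permExp {k : ℕ} (σ : Equiv.Perm (Fin k)) : (Fin k → ℤ) ≃+ (Fin k → ℤ) where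
  toFun w := w ∘ σ
  invFun w := w ∘ σ.symm
  left_inv w := by ext; simp
  right_inv w := by ext; simp
  map_add' _ _ := rfl

/-- Permutation of variables. -/
def act (S : Type) [CommRing S] {k : ℕ} (σ : Equiv.Perm (Fin k)) : Lau S k ≃ₐ[S] Lau S k :=
  AddMonoidAlgebra.domCongr S S (permExp σ)

section Laurent

variable {S : Type} [CommRing S] {k : ℕ}

lemma act_single (σ : Equiv.Perm (Fin k)) (w : Fin k → ℤ) (c : S) :
    act S σ (.single w c) = .single (w ∘ σ) c := by
  simp [act, permExp]

lemma coeff_act (σ : Equiv.Perm (Fin k)) (f : Lau S k) (m : Fin k → ℤ) :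
    (act S σ f).coeff m = f.coeff (m ∘ σ.symm) := by
  simp [act, permExp, AddMonoidAlgebra.coeff_domCongr]

lemma act_act (σ τ : Equiv.Perm (Fin k)) (f : Lau S k) :
    act S σ (act S τ f) = act S (τ * σ) f := by
  ext m
  simp only [coeff_act]
  congr 1

/-- The variables. -/
def X (S : Type) [CommRing S] {k : ℕ} (i : Fin k) : Lau S k := .single (Pi.single i 1) 1

lemma act_X (σ : Equiv.Perm (Fin k)) (i : Fin k) : act S σ (X S i) = X S (σ.symm i) := by
  rw [X, act_single, X]
  congr 1
  ext j
  simp [Pi.single_apply, Equiv.eq_symm_apply]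

/-- One factor. -/
def fac (h : S) (i j : Fin k) : Lau S k := X S i - X S j + algebraMap S _ h

lemma act_fac (σ : Equiv.Perm (Fin k)) (h : S) (i j : Fin k) :
    act S σ (fac h i j) = fac h (σ.symm i) (σ.symm j) := by
  simp only [fac, map_add, map_sub, act_X, AlgEquiv.commutes]

/-- The kernel product. -/
def ker (k : ℕ) (h : S) : Lau S k := ∏ i : Fin k, ∏ j ∈ Finset.Ioi i, fac h i j

/-- Antisymmetrization. -/
def asym (k : ℕ) (f : Lau S k) : Lau S k :=
  ∑ σ : Equiv.Perm (Fin k), ((Equiv.Perm.sign σ : ℤ) : S) • act S σ f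

lemma asym_add (f g : Lau S k) : asym k (f + g) = asym k f + asym k g := by
  simp [asym, Finset.sum_add_distrib]

lemma asym_smul (c : S) (f : Lau S k) : asym k (c • f) = c • asym k f := by
  simp only [asym, Finset.smul_sum, map_smul]
  exact Finset.sum_congr rfl fun _ _ => smul_comm _ _ _

/-- The shuffle map. -/
def shuf (k : ℕ) (h : S) : Lau S k →ₗ[S] Lau S k where
  toFun f := asym k (f * ker k h)
  map_add' f g := by rw [add_mul, asym_add]
  map_smul' c f := by rw [smul_mul_assoc, asym_smul]; rfl

lemma act_asym (τ : Equiv.Perm (Fin k)) (f : Lau S k) :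
    act S τ (asym k f) = ((Equiv.Perm.sign τ : ℤ) : S) • asym k f := by
  simp only [asym, map_sum, map_smul, act_act, Finset.smul_sum]
  refine Fintype.sum_equiv (Equiv.mulRight τ) _ _ fun σ => ?_
  simp only [Equiv.coe_mulRight, smul_smul]
  congr 1
  rw [← Int.cast_mul]
  congr 1
  simp only [Equiv.Perm.sign_mul, Units.val_mul]
  rcases Int.units_eq_one_or (Equiv.Perm.sign τ) with h | h <;> simp [h]

lemma asym_of_symm [IsDomain S] [CharZero S] (p q : Fin k) (hpq : p ≠ q) (f : Lau S k)
    (hf : act S (Equiv.swap p q) f = f) : asym k f = 0 := by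
  refine Finset.sum_involution (fun σ _ => Equiv.swap p q * σ) ?_ ?_ ?_ ?_
  · intro σ _
    rw [← act_act, hf, ← add_smul]
    simp [Equiv.Perm.sign_swap hpq]
  · intro σ _ _ h
    have : Equiv.swap p q = 1 := by simpa using h
    exact hpq (Equiv.swap_eq_refl_iff.1 this)
  · simp
  · intro σ _
    simp [← mul_assoc]

lemma ker_eq (h : S) : ker k h =
    ∏ x : Fin k × Fin k with x.1 < x.2, fac h x.1 x.2 := by
  rw [Finset.prod_filter, Fintype.prod_prod_type]
  refine Finset.prod_congr rfl fun i _ => ?_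
  rw [← Finset.prod_filter]
  exact Finset.prod_congr (by ext; simp) fun _ _ => rfl

lemma act_fac_mul_ker (h : S) (p q : Fin k) (hpq : (q : ℕ) = p + 1) :
    act S (Equiv.swap p q) (fac (-h) p q * ker k h) = fac (-h) p q * ker k h := by
  classical
  have hmem : ((p, q) : Fin k × Fin k) ∈ (Finset.univ.filter fun x : Fin k × Fin k => x.1 < x.2) := by
    simp only [Finset.mem_filter, Finset.mem_univ, true_and, Fin.lt_def]
    omega
  rw [ker_eq, ← Finset.mul_prod_erase _ _ hmem]
  simp only [map_mul, map_prod, act_fac, Equiv.symm_swap, Equiv.swap_apply_left,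
    Equiv.swap_apply_right, ← mul_assoc]
  congr 1
  · simp only [fac, map_neg]; ring
  · have key : ∀ x : Fin k × Fin k,
      x ∈ (Finset.univ.filter fun x : Fin k × Fin k => x.1 < x.2).erase (p, q) →
      (Equiv.swap p q x.1, Equiv.swap p q x.2) ∈
        (Finset.univ.filter fun x : Fin k × Fin k => x.1 < x.2).erase (p, q) := by
      rintro ⟨i, j⟩ hx
      simp only [Finset.mem_erase, ne_eq, Prod.mk.injEq, Finset.mem_filter, Finset.mem_univ,
        true_and, Fin.lt_def, Fin.ext_iff, Equiv.swap_apply_def] at hx ⊢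
      split_ifs <;> omega
    refine Finset.prod_bij' (fun x _ => (Equiv.swap p q x.1, Equiv.swap p q x.2))
      (fun x _ => (Equiv.swap p q x.1, Equiv.swap p q x.2)) key key ?_ ?_ ?_ <;> simp

lemma shuf_rel [IsDomain S] [CharZero S] (h : S) (p q : Fin k) (hpq : (q : ℕ) = p + 1)
    (g : Lau S k) (hg : act S (Equiv.swap p q) g = g) : shuf k h (g * fac (-h) p q) = 0 := by
  refine asym_of_symm p q (by rintro rfl; omega) _ ?_
  rw [mul_assoc, map_mul, hg, act_fac_mul_ker h p q hpq]

/-! degree bounds -/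

/-- Bound on exponents. -/
def Bd (φ : (Fin k → ℤ) →+ ℤ) (d : ℤ) (f : Lau S k) : Prop := ∀ m, f.coeff m ≠ 0 → φ m ≤ d

lemma Bd.add {φ : (Fin k → ℤ) →+ ℤ} {d : ℤ} {f g : Lau S k} (hf : Bd φ d f) (hg : Bd φ d g) :
    Bd φ d (f + g) := by
  intro m hm
  by_cases h : f.coeff m = 0
  · refine hg m fun h' => hm ?_
    simp [h, h']
  · exact hf m h

lemma Bd.smul {φ : (Fin k → ℤ) →+ ℤ} {d : ℤ} {f : Lau S k} (c : S) (hf : Bd φ d f) :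
    Bd φ d (c • f) := by
  intro m hm
  refine hf m fun h => hm ?_
  simp [h]

lemma Bd.zero {φ : (Fin k → ℤ) →+ ℤ} {d : ℤ} : Bd φ d (0 : Lau S k) := by
  intro m hm
  simp at hm

lemma Bd.sum {ι : Type*} {φ : (Fin k → ℤ) →+ ℤ} {d : ℤ} (s : Finset ι) {f : ι → Lau S k}
    (hf : ∀ i ∈ s, Bd φ d (f i)) : Bd φ d (∑ i ∈ s, f i) :=
  Finset.sum_induction _ _ (fun _ _ => Bd.add) Bd.zero hf

lemma Bd.single {φ : (Fin k → ℤ) →+ ℤ} {d : ℤ} {w : Fin k → ℤ} (c : S) (h : φ w ≤ d) :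
    Bd φ d (.single w c : Lau S k) := by
  classical
  intro m hm
  rw [AddMonoidAlgebra.coeff_single, Finsupp.single_apply] at hm
  split_ifs at hm with h'
  · exact h' ▸ h
  · simp at hm

lemma Bd.mul {φ : (Fin k → ℤ) →+ ℤ} {d d' : ℤ} {f g : Lau S k} (hf : Bd φ d f) (hg : Bd φ d' g) :
    Bd φ (d + d') (f * g) := by
  classical
  intro m hm
  have := AddMonoidAlgebra.support_coeff_mul_subset f g (Finsupp.mem_support_iff.2 hm)
  obtain ⟨a, ha, b, hb, rfl⟩ := Finset.mem_add.1 this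
  rw [map_add]
  exact add_le_add (hf a (Finsupp.mem_support_iff.1 ha)) (hg b (Finsupp.mem_support_iff.1 hb))

lemma Bd.prod {ι : Type*} {φ : (Fin k → ℤ) →+ ℤ} (s : Finset ι) {d : ι → ℤ} {f : ι → Lau S k}
    (hf : ∀ i ∈ s, Bd φ (d i) (f i)) : Bd φ (∑ i ∈ s, d i) (∏ i ∈ s, f i) := by
  classical
  induction s using Finset.induction_on with
  | empty => exact Bd.single _ (by simp)
  | insert a s ha ih =>
    rw [Finset.prod_insert ha, Finset.sum_insert ha]
    exact (hf a (by simp)).mul (ih fun i hi => hf i (by simp [hi]))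

lemma Bd.fac {φ : (Fin k → ℤ) →+ ℤ} {d : ℤ} (h : S) {i j : Fin k} (hd : 0 ≤ d)
    (hi : φ (Pi.single i 1) ≤ d) (hj : φ (Pi.single j 1) ≤ d) : Bd φ d (fac h i j) := by
  refine Bd.add ?_ (Bd.single _ (by simpa using hd))
  rw [sub_eq_add_neg, ← neg_one_smul S (X S j)]
  exact (Bd.single _ hi).add (Bd.smul _ (Bd.single _ hj))

lemma bd_ker_top (h : S) (i : Fin k) :
    Bd (Pi.evalAddMonoidHom (fun _ : Fin k => ℤ) i) (k - 1) (ker k h) := by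
  have e : (k - 1 : ℤ) = ∑ a : Fin k, ∑ b ∈ Finset.Ioi a,
      ((if a = i then 1 else 0) + (if b = i then 1 else 0)) := by
    simp only [Finset.sum_add_distrib, Finset.sum_const, Finset.sum_ite_eq', Finset.mem_Ioi,
      smul_ite, Finset.mem_univ, if_true, nsmul_eq_mul, mul_one,
      smul_zero, Fin.card_Ioi]
    rw [← Finset.sum_filter, Finset.sum_const]
    have : (Finset.univ.filter fun a : Fin k => a < i) = Finset.Iio i := by ext; simp
    rw [this, Fin.card_Iio]
    have := i.2
    simp
    omega
  rw [e]
  refine Bd.prod _ fun a _ => Bd.prod _ fun b _ => Bd.fac h ?_ ?_ ?_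
  · split_ifs <;> simp
  · simp only [Pi.evalAddMonoidHom_apply, Pi.single_apply, eq_comm]
    split_ifs <;> simp
  · simp only [Pi.evalAddMonoidHom_apply, Pi.single_apply, eq_comm]
    split_ifs <;> simp

lemma bd_ker_bot (h : S) (i : Fin k) :
    Bd (-Pi.evalAddMonoidHom (fun _ : Fin k => ℤ) i) 0 (ker k h) := by
  have e : (0 : ℤ) = ∑ a : Fin k, ∑ b ∈ Finset.Ioi a, 0 := by simp
  rw [e]
  refine Bd.prod _ fun a _ => Bd.prod _ fun b _ => Bd.fac h le_rfl ?_ ?_ <;>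
  · simp only [AddMonoidHom.neg_apply, Pi.evalAddMonoidHom_apply, Pi.single_apply]
    split_ifs <;> simp

lemma bd_asym_top {d : ℤ} {f : Lau S k}
    (hf : ∀ i, Bd (Pi.evalAddMonoidHom (fun _ : Fin k => ℤ) i) d f) (i : Fin k) :
    Bd (Pi.evalAddMonoidHom (fun _ : Fin k => ℤ) i) d (asym k f) := by
  refine Bd.sum _ fun σ _ => Bd.smul _ ?_
  intro m hm
  rw [coeff_act] at hm
  simpa using hf (σ i) _ hm

lemma bd_asym_bot {d : ℤ} {f : Lau S k}
    (hf : ∀ i, Bd (-Pi.evalAddMonoidHom (fun _ : Fin k => ℤ) i) d f) (i : Fin k) :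
    Bd (-Pi.evalAddMonoidHom (fun _ : Fin k => ℤ) i) d (asym k f) := by
  refine Bd.sum _ fun σ _ => Bd.smul _ ?_
  intro m hm
  rw [coeff_act] at hm
  simpa using hf (σ i) _ hm

lemma shuf_nonneg (h : S) {w : Fin k → ℤ} (hw : ∀ i, 0 ≤ w i) (c : S) (i : Fin k) :
    Bd (-Pi.evalAddMonoidHom (fun _ : Fin k => ℤ) i) 0 (shuf k h (.single w c)) := by
  refine bd_asym_bot (fun i => ?_) i
  have := (Bd.single (φ := -Pi.evalAddMonoidHom (fun _ : Fin k => ℤ) i) (d := 0) c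
    (by simpa using hw i)).mul (bd_ker_bot h i)
  simpa using this

lemma shuf_neg (h : S) {w : Fin k → ℤ} (hw : ∀ i, w i < 0) (c : S) (i : Fin k) :
    Bd (Pi.evalAddMonoidHom (fun _ : Fin k => ℤ) i) (k - 2) (shuf k h (.single w c)) := by
  refine bd_asym_top (fun i => ?_) i
  have := (Bd.single (φ := Pi.evalAddMonoidHom (fun _ : Fin k => ℤ) i) (d := -1) (w := w) c
    (by have := hw i; simp; omega)).mul (bd_ker_top h i)
  rwa [show (-1 + ((k : ℤ) - 1)) = k - 2 by ring] at this

lemma eq_zero_of_bd [IsDomain S] [CharZero S] (hk : 0 < k) (f : Lau S k)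
    (ha : ∀ τ, act S τ f = ((Equiv.Perm.sign τ : ℤ) : S) • f)
    (h1 : ∀ i, Bd (-Pi.evalAddMonoidHom (fun _ : Fin k => ℤ) i) 0 f)
    (h2 : ∀ i, Bd (Pi.evalAddMonoidHom (fun _ : Fin k => ℤ) i) (k - 2) f) : f = 0 := by
  ext m
  by_contra hm
  simp only [AddMonoidAlgebra.coeff_zero, Finsupp.coe_zero, Pi.zero_apply] at hm
  have b1 : ∀ i, 0 ≤ m i := fun i => by simpa using h1 i m hm
  have b2 : ∀ i, m i ≤ k - 2 := fun i => by simpa using h2 i m hm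
  obtain ⟨p, q, hpq, he⟩ : ∃ p q : Fin k, p ≠ q ∧ m p = m q := by
    have hc : (Finset.Icc (0 : ℤ) (k - 2)).card < (Finset.univ : Finset (Fin k)).card := by
      simp
      omega
    obtain ⟨p, _, q, _, h, h'⟩ := Finset.exists_ne_map_eq_of_card_lt_of_maps_to (f := m) hc
      (fun i _ => by simp only [Finset.coe_Icc, Set.mem_Icc]; exact ⟨b1 i, b2 i⟩)
    exact ⟨p, q, h, h'⟩
  have := congrArg (fun g => g.coeff m) (ha (Equiv.swap p q))
  simp only [coeff_act, Equiv.symm_swap, Equiv.Perm.sign_swap hpq] at this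
  have hs : m ∘ Equiv.swap p q = m := by
    ext i
    simp only [Function.comp, Equiv.swap_apply_def]
    split_ifs <;> simp_all
  rw [hs] at this
  simp at this
  exact hm (self_eq_neg.1 this)

/-! reduction at `h = 0` -/

lemma ker_zero_det : ker k (0 : S) = (Matrix.vandermonde fun i => -X S i).det := by
  rw [Matrix.det_vandermonde, ker]
  refine Finset.prod_congr rfl fun i _ => Finset.prod_congr rfl fun j _ => ?_
  simp [fac]
  ring

lemma act_ker_zero (σ : Equiv.Perm (Fin k)) :
    act S σ (ker k (0 : S)) = ((Equiv.Perm.sign σ : ℤ) : S) • ker k (0 : S) := by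
  rw [ker_zero_det, ← AlgEquiv.coe_ringEquiv, RingEquiv.map_det]
  have := Matrix.det_permute σ.symm (Matrix.vandermonde fun i => -X S (k := k) i)
  have e : ((act S σ : Lau S k ≃+* Lau S k).mapMatrix (Matrix.vandermonde fun i => -X S (k := k) i))
      = (Matrix.vandermonde fun i => -X S (k := k) i).submatrix σ.symm id := by
    ext1 i j
    simp [Matrix.vandermonde_apply, act_X]
  rw [e, this, Equiv.Perm.sign_symm, Algebra.smul_def]
  simp

lemma X_injective [Nontrivial S] : Function.Injective (X S : Fin k → Lau S k) := by
  intro i j h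
  by_contra hij
  have := congrArg (fun g => g.coeff (Pi.single i 1)) h
  have hne : (Pi.single j 1 : Fin k → ℤ) ≠ Pi.single i 1 := by
    intro h
    have := congrFun h i
    simp [hij] at this
  simp [X, hne] at this

lemma ker_zero_ne [IsDomain S] : ker k (0 : S) ≠ 0 := by
  rw [ker_zero_det, Matrix.det_vandermonde_ne_zero_iff]
  intro i j h
  exact X_injective (neg_injective h)

lemma symm_eq_zero_of_shuf_zero [IsDomain S] (f : Lau S k) (hf : shuf k (0 : S) f = 0) :
    ∑ σ : Equiv.Perm (Fin k), act S σ f = 0 := by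
  have : shuf k (0 : S) f = (∑ σ : Equiv.Perm (Fin k), act S σ f) * ker k (0 : S) := by
    rw [Finset.sum_mul]
    refine Finset.sum_congr rfl fun σ _ => ?_
    rw [map_mul, act_ker_zero, mul_smul_comm, smul_smul, ← Int.cast_mul]
    rcases Int.units_eq_one_or (Equiv.Perm.sign σ) with h | h <;> simp [h]
  rw [this] at hf
  exact (mul_eq_zero.1 hf).resolve_right ker_zero_ne

end Laurent

section Reduce

variable {S T : Type} [CommRing S] [CommRing T] {k : ℕ} (φ : S →+* T)

/-- Change of coefficients. -/
def red (k : ℕ) : Lau S k →+* Lau T k := AddMonoidAlgebra.mapRingHom _ φ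

lemma coeff_red (f : Lau S k) (m : Fin k → ℤ) : (red φ k f).coeff m = φ (f.coeff m) := by
  simp [red]

lemma red_act (σ : Equiv.Perm (Fin k)) (f : Lau S k) :
    red φ k (act S σ f) = act T σ (red φ k f) := by
  ext m
  simp [coeff_red, coeff_act]

lemma red_smul (c : S) (f : Lau S k) : red φ k (c • f) = φ c • red φ k f := by
  ext m
  simp [coeff_red]

lemma red_ker (h : S) : red φ k (ker k h) = ker k (φ h) := by
  simp only [ker, map_prod, fac, map_add, map_sub]
  refine Finset.prod_congr rfl fun i _ => Finset.prod_congr rfl fun j _ => ?_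
  have hX : ∀ i : Fin k, red φ k (X S i) = X T i := fun i => by simp [red, X]
  rw [hX, hX]
  congr 1
  rw [Algebra.algebraMap_eq_smul_one, Algebra.algebraMap_eq_smul_one, red_smul, map_one]

lemma red_shuf (h : S) (f : Lau S k) : red φ k (shuf k h f) = shuf k (φ h) (red φ k f) := by
  change red φ k (asym k (f * ker k h)) = asym k (red φ k f * ker k (φ h))
  simp only [asym, map_sum, red_smul, red_act, map_mul, red_ker]
  simp

end Reduce

/-! ## The map from the free algebra -/

instance charZero_R : CharZero R :=
  charZero_of_injective_ringHom (f := (PowerSeries.C : ℂ →+* R)) PowerSeries.C_injective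

/-- The exponent tuple of a list. -/
def tup (k : ℕ) (l : List ℤ) : Fin k → ℤ := fun i => l.getD i 0

/-- Value of the shuffle map on a word. -/
def wordVal (k : ℕ) (l : List ℤ) : Lau R k :=
  if l.length = k then shuf k hbar (.single (tup k l) 1) else 0

/-- The word in the free algebra. -/
def fword (l : List ℤ) : FreeAlgebra R ℤ := (l.map E).prod

lemma fword_append (a b : List ℤ) : fword (a ++ b) = fword a * fword b := by
  simp [fword]

/-- The shuffle map on the free algebra. -/
def freeMap (k : ℕ) : FreeAlgebra R ℤ →ₗ[R] Lau R k :=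
  (Finsupp.linearCombination R (fun l : FreeMonoid ℤ => wordVal k l.toList)) ∘ₗ
    (MonoidAlgebra.coeffLinearEquiv R).toLinearMap ∘ₗ
    (FreeAlgebra.equivMonoidAlgebraFreeMonoid (R := R) (X := ℤ)).toLinearMap

lemma equiv_fword (l : List ℤ) :
    FreeAlgebra.equivMonoidAlgebraFreeMonoid (R := R) (X := ℤ) (fword l) =
      MonoidAlgebra.of R (FreeMonoid ℤ) (FreeMonoid.ofList l) := by
  induction l with
  | nil => simp [fword]; rfl
  | cons a l ih =>
    have : fword (a :: l) = E a * fword l := by simp [fword]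
    rw [this, map_mul, ih, FreeMonoid.ofList_cons, map_mul]
    congr 1
    simp [E, FreeAlgebra.equivMonoidAlgebraFreeMonoid]

lemma freeMap_fword (k : ℕ) (l : List ℤ) : freeMap k (fword l) = wordVal k l := by
  have : freeMap k (fword l) = Finsupp.linearCombination R
    (fun l : FreeMonoid ℤ => wordVal k l.toList)
    (FreeAlgebra.equivMonoidAlgebraFreeMonoid (R := R) (X := ℤ) (fword l)).coeff := rfl
  rw [this, equiv_fword]
  simp [MonoidAlgebra.of_apply]

lemma mem_span_fword (x : FreeAlgebra R ℤ) : x ∈ Submodule.span R (Set.range fword) := by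
  have h : (⊤ : Subalgebra R (FreeAlgebra R ℤ)) = Algebra.adjoin R (Set.range (FreeAlgebra.ι R)) :=
    (FreeAlgebra.adjoin_range_ι R ℤ).symm
  have hx : x ∈ (⊤ : Subalgebra R (FreeAlgebra R ℤ)) := trivial
  rw [h, ← Subalgebra.mem_toSubmodule, Algebra.adjoin_eq_span] at hx
  refine Submodule.span_mono ?_ hx
  intro y hy
  induction hy using Submonoid.closure_induction with
  | mem y hy =>
    obtain ⟨n, rfl⟩ := hy
    exact ⟨[n], by simp [fword, E]⟩
  | one => exact ⟨[], by simp [fword]⟩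
  | mul y z _ _ hy hz =>
    obtain ⟨a, rfl⟩ := hy
    obtain ⟨b, rfl⟩ := hz
    exact ⟨a ++ b, fword_append a b⟩

lemma single_mul_fac {k : ℕ} (w : Fin k → ℤ) (p q : Fin k) (h : R) :
    (.single w 1 : Lau R k) * fac (-h) p q =
      .single (w + Pi.single p 1) 1 - .single (w + Pi.single q 1) 1 - h • .single w 1 := by
  rw [fac, mul_add, mul_sub, X, X, AddMonoidAlgebra.single_mul_single,
    AddMonoidAlgebra.single_mul_single, mul_comm _ (algebraMap _ _ _), ← Algebra.smul_def]
  simp [sub_eq_add_neg]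

lemma tup_left (k : ℕ) (a b : List ℤ) (m n : ℤ) (p : Fin k) (hp : (p : ℕ) = a.length) :
    tup k (a ++ (m + 1) :: n :: b) = tup k (a ++ m :: n :: b) + Pi.single p 1 := by
  ext i
  simp only [tup, Pi.add_apply, Pi.single_apply, Fin.ext_iff, hp, List.getD_eq_getElem?_getD]
  rcases lt_trichotomy (i : ℕ) a.length with h | h | h
  · rw [List.getElem?_append_left h, List.getElem?_append_left h, if_neg (by omega), add_zero]
  · simp [h]
  · rw [List.getElem?_append_right h.le, List.getElem?_append_right h.le, if_neg (by omega)]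
    obtain ⟨j, hj⟩ : ∃ j, (i : ℕ) - a.length = j + 1 := ⟨i - a.length - 1, by omega⟩
    simp [hj]

lemma tup_right (k : ℕ) (a b : List ℤ) (m n : ℤ) (q : Fin k) (hq : (q : ℕ) = a.length + 1) :
    tup k (a ++ m :: (n + 1) :: b) = tup k (a ++ m :: n :: b) + Pi.single q 1 := by
  have := tup_left k (a ++ [m]) (b := b.tail) (m := n) (n := b.headD 0) q (by simp [hq])
  cases b with
  | nil =>
    have e : ∀ c : List ℤ, tup k (c ++ [0]) = tup k c := by
      intro c
      ext i
      simp only [tup, List.getD_eq_getElem?_getD]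
      rcases lt_trichotomy (i : ℕ) c.length with h | h | h
      · rw [List.getElem?_append_left h]
      · simp [h]
      · rw [List.getElem?_append_right h.le, List.getElem?_eq_none (by simp; omega),
          List.getElem?_eq_none (by omega)]
    rw [← e, ← e (a ++ _)]
    simpa using this
  | cons c b => simpa using this

lemma tup_swap (k : ℕ) (a b : List ℤ) (m n : ℤ) (p q : Fin k) (hp : (p : ℕ) = a.length)
    (hq : (q : ℕ) = a.length + 1) :
    tup k (a ++ m :: n :: b) ∘ Equiv.swap p q = tup k (a ++ n :: m :: b) := by
  ext i
  simp only [tup, Function.comp, Equiv.swap_apply_def, List.getD_eq_getElem?_getD]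
  split_ifs with h1 h2
  · subst h1; simp [hp, hq]
  · subst h2; simp [hp, hq]
  · rw [Fin.ext_iff] at h1 h2
    rcases lt_or_ge (i : ℕ) a.length with h | h
    · rw [List.getElem?_append_left h, List.getElem?_append_left h]
    · rw [List.getElem?_append_right h, List.getElem?_append_right h]
      obtain ⟨j, hj⟩ : ∃ j, (i : ℕ) - a.length = j + 1 + 1 := ⟨i - a.length - 2, by omega⟩
      simp [hj]

lemma wordVal_rel (k : ℕ) (a b : List ℤ) (m n : ℤ) :
    wordVal k (a ++ (m + 1) :: n :: b) - wordVal k (a ++ n :: (m + 1) :: b)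
      - wordVal k (a ++ m :: (n + 1) :: b) + wordVal k (a ++ (n + 1) :: m :: b) =
      hbar • (wordVal k (a ++ m :: n :: b) + wordVal k (a ++ n :: m :: b)) := by
  by_cases hk : a.length + (b.length + 1 + 1) = k
  · let p : Fin k := ⟨a.length, by omega⟩
    let q : Fin k := ⟨a.length + 1, by omega⟩
    have hp : (p : ℕ) = a.length := rfl
    have hq : (q : ℕ) = a.length + 1 := rfl
    simp only [wordVal, List.length_append, List.length_cons, hk, if_true]
    have key := shuf_rel hbar p q hq
      (.single (tup k (a ++ m :: n :: b)) 1 + .single (tup k (a ++ n :: m :: b)) 1) (by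
        rw [map_add, act_single, act_single, tup_swap k a b m n p q hp hq,
          tup_swap k a b n m p q hp hq, add_comm])
    rw [add_mul, single_mul_fac, single_mul_fac, ← tup_left k a b m n p hp,
      ← tup_left k a b n m p hp, ← tup_right k a b m n q hq, ← tup_right k a b n m q hq] at key
    simp only [map_add, map_sub, map_smul] at key
    rw [← sub_eq_zero, ← key, smul_add]
    abel
  · simp [wordVal, hk]

lemma freeMap_rel (k : ℕ) {x y : FreeAlgebra R ℤ} (h : ERel x y) (a b : FreeAlgebra R ℤ) :
    freeMap k (a * x * b) = freeMap k (a * y * b) := by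
  obtain ⟨m, n⟩ := h
  have ha := mem_span_fword a
  have hb := mem_span_fword b
  induction ha using Submodule.span_induction with
  | zero => simp
  | add u v _ _ hu hv => simp only [add_mul, map_add, hu, hv]
  | smul c u _ hu => simp only [smul_mul_assoc, map_smul, hu]
  | mem u hu =>
  induction hb using Submodule.span_induction with
  | zero => simp
  | add u v _ _ hu hv => rw [mul_add _ u v, mul_add _ u v, map_add, map_add, hu, hv]
  | smul c u _ hu => simp only [mul_smul_comm, map_smul, hu]
  | mem v hv =>
  obtain ⟨a, rfl⟩ := hu
  obtain ⟨b, rfl⟩ := hv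
  have e : ∀ i j : ℤ, fword a * (E i * E j) * fword b = fword (a ++ i :: j :: b) := by
    intro i j
    simp [fword, mul_assoc]
  simp only [mul_add, mul_sub, add_mul, sub_mul, mul_smul_comm, smul_mul_assoc, e, map_add,
    map_sub, map_smul, freeMap_fword]
  exact wordVal_rel k a b m n

lemma freeMap_Rel (k : ℕ) {x y : FreeAlgebra R ℤ} (h : RingQuot.Rel ERel x y) :
    ∀ a b : FreeAlgebra R ℤ, freeMap k (a * x * b) = freeMap k (a * y * b) := by
  induction h with
  | of h => exact freeMap_rel k h
  | add_left _ ih => intro a b; simp only [mul_add, add_mul, map_add, ih]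
  | mul_left _ ih => intro a b; simp only [← mul_assoc a]; rw [mul_assoc, ih, ← mul_assoc]
  | mul_right _ ih => intro a b; simp only [← mul_assoc a]; exact ih _ _

lemma freeMap_eq (k : ℕ) {x y : FreeAlgebra R ℤ}
    (h : RingQuot.mkAlgHom R ERel x = RingQuot.mkAlgHom R ERel y) : freeMap k x = freeMap k y := by
  have h' : RingQuot.mkRingHom ERel x = RingQuot.mkRingHom ERel y := by
    rw [← RingQuot.mkAlgHom_coe R]; exact h
  rw [RingQuot.mkRingHom_def] at h'
  have h2 : Quot.mk (RingQuot.Rel ERel) x = Quot.mk (RingQuot.Rel ERel) y :=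
    congrArg RingQuot.toQuot h'
  have h3 := Quot.eqvGen_exact h2
  clear h h' h2
  induction h3 with
  | rel x y h => simpa using freeMap_Rel k h 1 1
  | refl => rfl
  | symm x y _ ih => exact ih.symm
  | trans x y z _ _ h1 h2 => exact h1.trans h2

/-- A copy of `U`, with ring instances chosen so that subtraction unifies well. -/
def Ucopy : Type := U

instance : Ring Ucopy := inferInstanceAs (Ring U)

instance : Algebra R Ucopy := inferInstanceAs (Algebra R (RingQuot ERel))

/-- The quotient map to the copy of `U`. -/
def mkA : FreeAlgebra R ℤ →ₐ[R] Ucopy := RingQuot.mkAlgHom R ERel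

/-- The generators in the copy of `U`. -/
def egen (n : ℤ) : Ucopy := e n

/-- The quotient map as a linear map. -/
def proj : FreeAlgebra R ℤ →ₗ[R] Ucopy := (mkA).toLinearMap

lemma proj_surjective : Function.Surjective proj := RingQuot.mkAlgHom_surjective R ERel

lemma freeMap_eq' (k : ℕ) {x y : FreeAlgebra R ℤ} (h : proj x = proj y) :
    freeMap k x = freeMap k y := freeMap_eq k h

/-- The shuffle map on `U`. -/
def Psi (k : ℕ) : Ucopy →ₗ[R] Lau R k where
  toFun u := freeMap k (Function.surjInv proj_surjective u)
  map_add' u v := by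
    rw [← map_add]
    refine freeMap_eq' k ?_
    rw [map_add]
    simp only [Function.surjInv_eq]
  map_smul' c u := by
    rw [RingHom.id_apply, ← map_smul]
    refine freeMap_eq' k ?_
    rw [map_smul]
    simp only [Function.surjInv_eq]

lemma Psi_proj (k : ℕ) (x : FreeAlgebra R ℤ) : Psi k (proj x) = freeMap k x :=
  freeMap_eq' k (Function.surjInv_eq proj_surjective (proj x))

/-- The word in `U`. -/
def uword (l : List ℤ) : Ucopy := (l.map egen).prod

lemma uword_cons (a : ℤ) (l : List ℤ) : uword (a :: l) = egen a * uword l := by simp [uword]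

lemma uword_append (a b : List ℤ) : uword (a ++ b) = uword a * uword b := by simp [uword]

lemma proj_fword (l : List ℤ) : proj (fword l) = uword l := by
  change mkA (fword l) = _
  rw [fword, map_list_prod, List.map_map]
  rfl

lemma Psi_uword (k : ℕ) (l : List ℤ) : Psi k (uword l) = wordVal k l := by
  rw [← proj_fword, Psi_proj, freeMap_fword]

lemma mem_span_uword (x : Ucopy) : x ∈ Submodule.span R (Set.range uword) := by
  obtain ⟨y, rfl⟩ := proj_surjective x
  have := Submodule.mem_map_of_mem (f := proj) (mem_span_fword y)
  rw [Submodule.map_span, ← Set.range_comp] at this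
  convert this using 3
  ext l
  exact (proj_fword l).symm

lemma e_rel (m n : ℤ) : egen (m + 1) * egen n - egen n * egen (m + 1) =
    egen m * egen (n + 1) - egen (n + 1) * egen m + hbar • (egen m * egen n + egen n * egen m) := by
  have : mkA _ = mkA _ := RingQuot.mkAlgHom_rel R (ERel.current m n)
  simp only [map_add, map_sub, map_mul, map_smul] at this
  change egen (m + 1) * egen n - egen n * egen (m + 1) - egen m * egen (n + 1) + egen (n + 1) * egen m =
    hbar • (egen m * egen n + egen n * egen m) at this
  rw [← this]
  abel

/-! ## Finitely generated pieces and Nakayama -/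

/-- Span of words of length `k` with bounded letters. -/
def ML (k N : ℕ) : Submodule R Ucopy :=
  Submodule.span R (uword '' {l | l.length = k ∧ ∀ a ∈ l, a.natAbs ≤ N})

/-- `ℏ` times the previous module. -/
def hML (k N : ℕ) : Submodule R Ucopy := (ML k N).map (LinearMap.lsmul R Ucopy hbar)

lemma smul_mem_hML {k N : ℕ} {x : Ucopy} (hx : x ∈ ML k N) : hbar • x ∈ hML k N :=
  ⟨x, hx, rfl⟩

lemma uword_mem_ML {k N : ℕ} {l : List ℤ} (h : l.length = k) (h' : ∀ a ∈ l, a.natAbs ≤ N) :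
    uword l ∈ ML k N := Submodule.subset_span ⟨l, ⟨h, h'⟩, rfl⟩

lemma e_mul_ML {k N : ℕ} {a : ℤ} (ha : a.natAbs ≤ N) {x : Ucopy} (hx : x ∈ ML k N) :
    egen a * x ∈ ML (k + 1) N := by
  induction hx using Submodule.span_induction with
  | mem x hx =>
    obtain ⟨l, ⟨h1, h2⟩, rfl⟩ := hx
    rw [← uword_cons]
    exact uword_mem_ML (by simp [h1]) (by simpa using ⟨ha, h2⟩)
  | zero => simp
  | add x y _ _ hx hy => rw [mul_add]; exact add_mem hx hy
  | smul c x _ hx => rw [mul_smul_comm]; exact Submodule.smul_mem _ _ hx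

lemma ML_mul_uword {k N : ℕ} {l : List ℤ} (hl : ∀ a ∈ l, a.natAbs ≤ N) {x : Ucopy} (hx : x ∈ ML k N) :
    x * uword l ∈ ML (k + l.length) N := by
  induction hx using Submodule.span_induction with
  | mem x hx =>
    obtain ⟨l', ⟨h1, h2⟩, rfl⟩ := hx
    rw [← uword_append]
    refine uword_mem_ML (by simp [h1]) ?_
    intro a ha
    rcases List.mem_append.1 ha with h | h
    · exact h2 a h
    · exact hl a h
  | zero => simp
  | add x y _ _ hx hy => rw [add_mul]; exact add_mem hx hy
  | smul c x _ hx => rw [smul_mul_assoc]; exact Submodule.smul_mem _ _ hx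

lemma e_mul_hML {k N : ℕ} {a : ℤ} (ha : a.natAbs ≤ N) {x : Ucopy} (hx : x ∈ hML k N) :
    egen a * x ∈ hML (k + 1) N := by
  obtain ⟨y, hy, rfl⟩ := hx
  rw [LinearMap.lsmul_apply, mul_smul_comm]
  exact smul_mem_hML (e_mul_ML ha hy)

lemma hML_mul_uword {k N : ℕ} {l : List ℤ} (hl : ∀ a ∈ l, a.natAbs ≤ N) {x : Ucopy}
    (hx : x ∈ hML k N) : x * uword l ∈ hML (k + l.length) N := by
  obtain ⟨y, hy, rfl⟩ := hx
  rw [LinearMap.lsmul_apply, smul_mul_assoc]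
  exact smul_mem_hML (ML_mul_uword hl hy)

lemma ee_mem {N : ℕ} {a b : ℤ} (ha : a.natAbs ≤ N) (hb : b.natAbs ≤ N) : egen a * egen b ∈ ML 2 N := by
  have : egen a * egen b = uword [a, b] := by simp [uword]
  rw [this]
  exact uword_mem_ML rfl (by simp [ha, hb])

lemma comm_tele {N : ℕ} {a b : ℤ} (ha : a.natAbs ≤ N) (hb : b.natAbs ≤ N) (j : ℕ)
    (hj : b + j ≤ a) :
    (egen a * egen b - egen b * egen a) - (egen (a - j) * egen (b + j) - egen (b + j) * egen (a - j)) ∈ hML 2 N := by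
  induction j with
  | zero => simp
  | succ j ih =>
    push_cast at hj ⊢
    have h1 := ih (by omega)
    have h2 : hbar • (egen (a - j - 1) * egen (b + j) + egen (b + j) * egen (a - j - 1)) ∈ hML 2 N :=
      smul_mem_hML (add_mem (ee_mem (by omega) (by omega)) (ee_mem (by omega) (by omega)))
    have h3 := e_rel (a - j - 1) (b + j)
    rw [sub_add_cancel] at h3
    rw [h3] at h1
    convert add_mem h1 h2 using 1
    rw [show a - ((j : ℤ) + 1) = a - j - 1 by ring, show b + ((j : ℤ) + 1) = b + j + 1 by ring]
    abel

lemma mem_of_nsmul_mem (M : Submodule R Ucopy) (n : ℕ) (hn : n ≠ 0) (x : Ucopy) (h : (n : R) • x ∈ M) :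
    x ∈ M := by
  have := M.smul_mem (PowerSeries.C ((n : ℂ)⁻¹)) h
  rw [smul_smul] at this
  have e : (PowerSeries.C ((n : ℂ)⁻¹) * (n : R)) = 1 := by
    rw [← map_natCast (PowerSeries.C : ℂ →+* R), ← map_mul, inv_mul_cancel₀ (by exact_mod_cast hn),
      map_one]
  rwa [e, one_smul] at this

lemma comm_mem {N : ℕ} {a b : ℤ} (ha : a.natAbs ≤ N) (hb : b.natAbs ≤ N) :
    egen a * egen b - egen b * egen a ∈ hML 2 N := by
  wlog hab : b ≤ a generalizing a b
  · rw [← neg_mem_iff, neg_sub]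
    exact this hb ha (by omega)
  have h := comm_tele ha hb (a - b).toNat (by omega)
  rw [Int.toNat_of_nonneg (by omega), sub_sub_cancel, add_sub_cancel] at h
  refine mem_of_nsmul_mem _ 2 (by norm_num) _ ?_
  convert h using 1
  rw [Nat.cast_smul_eq_nsmul, two_nsmul]
  abel

lemma perm_mem {N : ℕ} {l l' : List ℤ} (h : l.Perm l') (hl : ∀ a ∈ l, a.natAbs ≤ N) :
    uword l - uword l' ∈ hML l.length N := by
  induction h with
  | nil => simp
  | cons a h ih =>
    rw [uword_cons, uword_cons, ← mul_sub]
    exact e_mul_hML (hl a (by simp)) (ih fun b hb => hl b (by simp [hb]))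
  | swap a b l =>
    have := hML_mul_uword (l := l) (fun c hc => hl c (by simp [hc]))
      (comm_mem (N := N) (hl b (by simp)) (hl a (by simp)))
    simp only [uword_cons, ← mul_assoc, ← sub_mul, List.length_cons]
    rwa [add_comm] at this
  | trans h1 h2 ih1 ih2 =>
    have a1 := ih1 hl
    have a2 := ih2 fun a ha => hl a (h1.mem_iff.2 ha)
    rw [← h1.length_eq] at a2
    simpa using add_mem a1 a2

/-- The word attached to a tuple. -/
def tword {k : ℕ} (w : Fin k → ℤ) : Ucopy := uword (List.ofFn w)

lemma ML_eq (k N : ℕ) :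
    ML k N = Submodule.span R (tword '' {w : Fin k → ℤ | ∀ i, (w i).natAbs ≤ N}) := by
  rw [ML]
  congr 1
  ext x
  constructor
  · rintro ⟨l, ⟨rfl, h⟩, rfl⟩
    exact ⟨l.get, fun i => h _ (List.get_mem _ _), by rw [tword, List.ofFn_get]⟩
  · rintro ⟨w, h, rfl⟩
    exact ⟨List.ofFn w, ⟨by simp, by simpa [List.mem_ofFn] using h⟩, rfl⟩

lemma ML_fg (k N : ℕ) : (ML k N).FG := by
  rw [ML_eq]
  refine Submodule.fg_span (Set.Finite.image _ ?_)
  refine Set.Finite.subset (Set.Finite.pi' (t := fun _ : Fin k => Set.Icc (-(N : ℤ)) N)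
    fun _ => Set.finite_Icc _ _) ?_
  intro w hw i
  have := hw i
  simp only [Set.mem_Icc]
  omega

/-- From Laurent polynomials to `U`. -/
def V (k : ℕ) : Lau R k →ₗ[R] Ucopy :=
  (Finsupp.linearCombination R tword) ∘ₗ (AddMonoidAlgebra.coeffLinearEquiv R).toLinearMap

lemma V_single {k : ℕ} (w : Fin k → ℤ) (c : R) : V k (.single w c) = c • tword w := by
  have : V k (.single w c) = Finsupp.linearCombination R tword (Finsupp.single w c) := rfl
  rw [this, Finsupp.linearCombination_single]

lemma tup_ofFn {k : ℕ} (w : Fin k → ℤ) : tup k (List.ofFn w) = w := by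
  ext i
  simp [tup, List.getD_eq_getElem?_getD]

lemma Psi_tword {k : ℕ} (w : Fin k → ℤ) : Psi k (tword w) = shuf k hbar (.single w 1) := by
  rw [tword, Psi_uword, wordVal, if_pos (by simp), tup_ofFn]

lemma lau_sum {S : Type} [CommRing S] {k : ℕ} (F : Lau S k) :
    F = ∑ w ∈ F.coeff.support, .single w (F.coeff w) := by
  exact (AddMonoidAlgebra.sum_coeff_single F).symm

lemma Psi_V {k : ℕ} (F : Lau R k) : Psi k (V k F) = shuf k hbar F := by
  rw [lau_sum F, map_sum, map_sum, map_sum]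
  refine Finset.sum_congr rfl fun w _ => ?_
  rw [V_single, map_smul, Psi_tword, ← map_smul]
  simp

lemma V_act {k N : ℕ} (F : Lau R k) (hF : ∀ w, F.coeff w ≠ 0 → ∀ i, (w i).natAbs ≤ N)
    (σ : Equiv.Perm (Fin k)) : V k (act R σ F) - V k F ∈ hML k N := by
  have e : V k (act R σ F) - V k F =
      ∑ w ∈ F.coeff.support, F.coeff w • (tword (w ∘ σ) - tword w) := by
    conv_lhs => rw [lau_sum F, map_sum, map_sum, map_sum, ← Finset.sum_sub_distrib]
    refine Finset.sum_congr rfl fun w _ => ?_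
    rw [act_single, V_single, V_single, smul_sub]
  rw [e]
  refine sum_mem fun w hw => Submodule.smul_mem _ _ ?_
  have := perm_mem (N := N) (σ.ofFn_comp_perm w) (by
    intro a ha
    obtain ⟨i, rfl⟩ := (List.mem_ofFn ..).1 ha
    exact hF w (Finsupp.mem_support_iff.1 hw) _)
  simpa [tword] using this

lemma mem_hML_of_Psi {k N : ℕ} {x : Ucopy} (hx : x ∈ ML k N) (h0 : Psi k x = 0) : x ∈ hML k N := by
  rw [ML_eq, Finsupp.mem_span_image_iff_linearCombination] at hx
  obtain ⟨f, hf, rfl⟩ := hx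
  obtain ⟨F, rfl⟩ : ∃ F : Lau R k, F.coeff = f := ⟨.ofCoeff f, rfl⟩
  have hF : ∀ w, F.coeff w ≠ 0 → ∀ i, (w i).natAbs ≤ N := fun w hw =>
    hf (Finsupp.mem_support_iff.2 hw)
  change Psi k (V k F) = 0 at h0
  change V k F ∈ hML k N
  rw [Psi_V] at h0
  have h1 : ∑ σ : Equiv.Perm (Fin k), act ℂ σ (red (PowerSeries.constantCoeff (R := ℂ)) k F) = 0 := by
    refine symm_eq_zero_of_shuf_zero _ ?_
    have := red_shuf (PowerSeries.constantCoeff (R := ℂ)) hbar F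
    rw [h0, map_zero] at this
    rw [this]
    simp [hbar]
  set G : Lau R k := ∑ σ : Equiv.Perm (Fin k), act R σ F with hG
  have h2 : red (PowerSeries.constantCoeff (R := ℂ)) k G = 0 := by
    rw [hG, map_sum, ← h1]
    exact Finset.sum_congr rfl fun σ _ => red_act _ σ F
  have h3 : V k G ∈ hML k N := by
    rw [lau_sum G, map_sum]
    refine sum_mem fun w hw => ?_
    have hw' := Finsupp.mem_support_iff.1 hw
    have hd : PowerSeries.constantCoeff (R := ℂ) (G.coeff w) = 0 := by
      rw [← coeff_red, h2]; simp
    obtain ⟨c, hc⟩ := PowerSeries.X_dvd_iff.2 hd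
    have hbox : ∀ i, (w i).natAbs ≤ N := by
      have : ∃ σ : Equiv.Perm (Fin k), F.coeff (w ∘ σ.symm) ≠ 0 := by
        by_contra! hcon
        refine hw' ?_
        rw [hG, AddMonoidAlgebra.coeff_sum, Finsupp.finsetSum_apply]
        exact Finset.sum_eq_zero fun σ _ => by rw [coeff_act, hcon]
      obtain ⟨σ, hσ⟩ := this
      intro i
      simpa using hF _ hσ (σ i)
    rw [V_single, hc, mul_smul]
    refine smul_mem_hML (Submodule.smul_mem _ _ ?_)
    rw [ML_eq]
    exact Submodule.subset_span ⟨w, hbox, rfl⟩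
  have h4 : ∑ σ : Equiv.Perm (Fin k), (V k (act R σ F) - V k F) ∈ hML k N :=
    sum_mem fun σ _ => V_act F hF σ
  rw [Finset.sum_sub_distrib, ← map_sum, ← hG, Finset.sum_const] at h4
  have h5 := sub_mem h3 h4
  rw [sub_sub_cancel] at h5
  refine mem_of_nsmul_mem _ _ (Fintype.card_ne_zero (α := Equiv.Perm (Fin k))) _ ?_
  rwa [Nat.cast_smul_eq_nsmul]

lemma eq_zero_of_ML {k N : ℕ} {x : Ucopy} (hx : x ∈ ML k N) (h0 : Psi k x = 0) : x = 0 := by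
  have hfg : (ML k N ⊓ LinearMap.ker (Psi k)).FG := by
    have := isNoetherian_of_fg_of_noetherian (ML k N) (ML_fg k N)
    exact isNoetherian_submodule.1 this _ inf_le_left
  have hbot := Submodule.eq_bot_of_le_smul_of_le_jacobson_bot (Ideal.span {hbar})
    (ML k N ⊓ LinearMap.ker (Psi k)) hfg ?_ ?_
  · have : x ∈ ML k N ⊓ LinearMap.ker (Psi k) := ⟨hx, h0⟩
    rw [hbot] at this
    simpa using this
  · rintro y ⟨hy, hy0⟩
    obtain ⟨z, hz, rfl⟩ := mem_hML_of_Psi hy hy0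
    refine Submodule.smul_mem_smul (Ideal.mem_span_singleton_self _) ⟨hz, ?_⟩
    have h : hbar • Psi k z = 0 := by rw [← map_smul]; exact hy0
    change Psi k z = 0
    ext1
    ext1 m
    have := congrArg (fun g => g.coeff m) h
    simp only [AddMonoidAlgebra.coeff_smul, Finsupp.smul_apply, smul_eq_mul,
      AddMonoidAlgebra.coeff_zero, Finsupp.coe_zero, Pi.zero_apply, mul_eq_zero] at this
    exact this.resolve_left PowerSeries.X_ne_zero
  · rw [IsLocalRing.jacobson_eq_maximalIdeal _ bot_ne_top, Ideal.span_singleton_le_iff_mem,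
      IsLocalRing.mem_maximalIdeal, mem_nonunits_iff, PowerSeries.isUnit_iff_constantCoeff]
    simp [hbar]

/-! ## Conclusion -/

lemma eq_zero_of_Psi {x : Ucopy} (h : ∀ k, Psi k x = 0) : x = 0 := by
  classical
  have hx := mem_span_uword x
  rw [Finsupp.mem_span_range_iff_exists_finsupp] at hx
  obtain ⟨c, rfl⟩ := hx
  obtain ⟨N, hN⟩ : ∃ N : ℕ, ∀ l ∈ c.support, ∀ a ∈ l, a.natAbs ≤ N := by
    refine ⟨(c.support.biUnion List.toFinset).sup Int.natAbs, fun l hl a ha => ?_⟩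
    exact Finset.le_sup (f := Int.natAbs) (Finset.mem_biUnion.2 ⟨l, hl, by simpa using ha⟩)
  have hs := Finset.sum_fiberwise_of_maps_to (s := c.support) (t := c.support.image List.length)
    (g := List.length) (fun l hl => Finset.mem_image_of_mem _ hl) (fun l => c l • uword l)
  change ∑ l ∈ c.support, c l • uword l = 0
  change ∀ k, Psi k (∑ l ∈ c.support, c l • uword l) = 0 at h
  rw [← hs]
  refine Finset.sum_eq_zero fun k _ => ?_
  refine eq_zero_of_ML (k := k) (N := N) ?_ ?_
  · refine sum_mem fun l hl => Submodule.smul_mem _ _ ?_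
    rw [Finset.mem_filter] at hl
    exact uword_mem_ML hl.2 (hN l hl.1)
  · rw [← h k, map_sum, map_sum, Finset.sum_filter]
    refine Finset.sum_congr rfl fun l _ => ?_
    split_ifs with hl
    · rfl
    · rw [map_smul, Psi_uword, wordVal, if_neg hl, smul_zero]

lemma mem_span_of_adjoin (p : ℤ → Prop) (s : Set Ucopy) (hs : ∀ y ∈ s, ∃ n, p n ∧ y = egen n) {x : Ucopy}
    (hx : x ∈ Algebra.adjoin R s) : x ∈ Submodule.span R (uword '' {l | ∀ a ∈ l, p a}) := by
  rw [← Subalgebra.mem_toSubmodule, Algebra.adjoin_eq_span] at hx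
  refine Submodule.span_mono ?_ hx
  intro y hy
  induction hy using Submonoid.closure_induction with
  | mem y hy =>
    obtain ⟨n, hn, rfl⟩ := hs y hy
    exact ⟨[n], by simpa using hn, by simp [uword]⟩
  | one => exact ⟨[], by simp, by simp [uword]⟩
  | mul y z _ _ hy hz =>
    obtain ⟨a, ha, rfl⟩ := hy
    obtain ⟨b, hb, rfl⟩ := hz
    refine ⟨a ++ b, ?_, uword_append a b⟩
    intro c hc
    rcases List.mem_append.1 hc with h | h
    · exact ha c h
    · exact hb c h

lemma tup_prop (p : ℤ → Prop) {k : ℕ} {l : List ℤ} (hk : l.length = k) (hl : ∀ a ∈ l, p a)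
    (i : Fin k) : p (tup k l i) := by
  have : (i : ℕ) < l.length := by omega
  simp only [tup, List.getD_eq_getElem?_getD, List.getElem?_eq_getElem this, Option.getD_some]
  exact hl _ (List.getElem_mem this)

lemma bd_of_span (p : ℤ → Prop) {k : ℕ} (φ : (Fin k → ℤ) →+ ℤ) (d : ℤ)
    (H : ∀ w : Fin k → ℤ, (∀ i, p (w i)) → Bd φ d (shuf k hbar (.single w 1))) {x : Ucopy}
    (hx : x ∈ Submodule.span R (uword '' {l | ∀ a ∈ l, p a})) : Bd φ d (Psi k x) := by
  induction hx using Submodule.span_induction with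
  | mem x hx =>
    obtain ⟨l, hl, rfl⟩ := hx
    rw [Psi_uword, wordVal]
    split_ifs with hk
    · exact H _ (tup_prop p hk hl)
    · exact Bd.zero
  | zero => rw [map_zero]; exact Bd.zero
  | add x y _ _ hx hy => rw [map_add]; exact hx.add hy
  | smul c x _ hx => rw [map_smul]; exact hx.smul c

lemma act_Psi {k : ℕ} (τ : Equiv.Perm (Fin k)) (x : Ucopy) :
    act R τ (Psi k x) = ((Equiv.Perm.sign τ : ℤ) : R) • Psi k x := by
  have hx := mem_span_uword x
  induction hx using Submodule.span_induction with
  | mem x hx =>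
    obtain ⟨l, rfl⟩ := hx
    rw [Psi_uword, wordVal]
    split_ifs
    · exact act_asym τ _
    · simp
  | zero => simp
  | add x y _ _ hx hy => rw [map_add, map_add, hx, hy, smul_add]
  | smul c x _ hx => rw [map_smul, map_smul, hx, smul_comm]

lemma Psi_one (k : ℕ) : Psi k 1 = if k = 0 then 1 else 0 := by
  have : (1 : Ucopy) = uword [] := by simp [uword]
  rw [this, Psi_uword, wordVal]
  split_ifs with h h' h'
  · subst h'
    change asym 0 (AddMonoidAlgebra.single _ 1 * ker 0 hbar) = 1
    simp [asym, ker, AddMonoidAlgebra.one_def]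
    rw [act_single]
    congr 1
  · simp at h; omega
  · simp at h; omega
  · rfl

lemma eq_scalar {x : Ucopy} (hz : ∀ k, 0 < k → Psi k x = 0) :
    x = (Psi 0 x).coeff 0 • (1 : Ucopy) := by
  rw [← sub_eq_zero]
  refine eq_zero_of_Psi fun k => ?_
  rw [map_sub, map_smul, Psi_one]
  split_ifs with hk
  · subst hk
    refine AddMonoidAlgebra.ext ?_
    refine Finsupp.ext fun m => ?_
    rw [Subsingleton.elim m 0]
    have h1 : (1 : Lau R 0).coeff 0 = 1 := by
      rw [AddMonoidAlgebra.one_def, AddMonoidAlgebra.coeff_single, Finsupp.single_eq_same]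
    rw [AddMonoidAlgebra.coeff_sub, Finsupp.sub_apply, AddMonoidAlgebra.coeff_smul,
      Finsupp.smul_apply, h1, smul_eq_mul, mul_one, sub_self]
    rfl
  · rw [hz k (by omega)]
    simp

/-- the intersection of the subalgebras `U^{≥0}` and `U^{<0}` is reduced
to the scalars `R·1`, i.e. the bottom subalgebra (the image of `R` under the unit map). -/
theorem inf_ge_lt_eq_bot : Uge ⊓ Ult = (⊥ : Subalgebra R U) := by
  refine le_antisymm ?_ bot_le
  rintro x ⟨h1, h2⟩
  have s1 := mem_span_of_adjoin (fun n => 0 ≤ n) _ (by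
    rintro y ⟨n, rfl⟩
    exact ⟨n, by positivity, rfl⟩) h1
  have s2 := mem_span_of_adjoin (fun n => n < 0) _ (by
    rintro y ⟨n, hn, rfl⟩
    exact ⟨n, hn, rfl⟩) h2
  have hz : ∀ k, 0 < k → Psi k x = 0 := fun k hk => eq_zero_of_bd hk _ (fun τ => act_Psi τ x)
    (fun i => bd_of_span _ _ _ (fun w hw => shuf_nonneg hbar hw 1 i) s1)
    (fun i => bd_of_span _ _ _ (fun w hw => shuf_neg hbar hw 1 i) s2)
  have hx := eq_scalar hz
  rw [Algebra.mem_bot]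
  exact ⟨(Psi 0 x).coeff 0, (Algebra.algebraMap_eq_smul_one (A := Ucopy) _).trans hx.symm⟩

end
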